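/- There exists a nonzero Schwartz function f : ℝ → ℂ that is even (f(−x) = f(x) for all x) and satisfies f(n) = 0, f′(n) = 0, f̂(n) = 0, and (f̂)′(n) = 0 for every integer n ≥ 1, where f̂ is the Fourier transform of f. Consequently, even (radial) Schwartz functions on ℝ are not uniquely determined by the values f(n), f′(n), f̂(n), f̂′(n) for integers n ≥ 1. -/

import Mathlib

noncomputable section

/-- The Fourier transform `f̂(y) = ∫_ℝ f(x) e^{-2πixy} dx` of a Schwartz function on `ℝ`. -/
def FT (f : SchwartzMap ℝ ℂ) : SchwartzMap ℝ ℂ := SchwartzMap.fourierTransformCLM ℂ f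

/-- A bump function supported in `[1/4, 1/2]`. -/
def bmp : ContDiffBump (3 / 8 : ℝ) where
  rIn := 1 / 16
  rOut := 1 / 8
  rIn_pos := by norm_num
  rIn_lt_rOut := by norm_num

lemma bmp_zero_left {x : ℝ} (h : x ≤ 1 / 4) : bmp x = 0 := by
  apply bmp.zero_of_le_dist
  rw [Real.dist_eq, abs_sub_comm]
  exact le_trans (by simp only [bmp]; linarith) (le_abs_self _)

lemma bmp_zero_right {x : ℝ} (h : 1 / 2 ≤ x) : bmp x = 0 := by
  apply bmp.zero_of_le_dist
  rw [Real.dist_eq]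
  exact le_trans (by simp only [bmp]; linarith) (le_abs_self _)

lemma bmp_mid : bmp (3 / 8 : ℝ) = 1 := by
  apply bmp.one_of_mem_closedBall
  simp [bmp]

/-- The bump as a complex Schwartz function. -/
def bS : SchwartzMap ℝ ℂ :=
  HasCompactSupport.toSchwartzMap (f := fun x => ((bmp x : ℝ) : ℂ))
    (bmp.hasCompactSupport.comp_left (g := fun x : ℝ => (x : ℂ)) (by simp))
    (Complex.ofRealCLM.contDiff.comp bmp.contDiff)

lemma bS_apply (x : ℝ) : bS x = ((bmp x : ℝ) : ℂ) := rfl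

/-- The even version of the bump. -/
def HS : SchwartzMap ℝ ℂ :=
  bS + SchwartzMap.compCLMOfContinuousLinearEquiv ℂ (ContinuousLinearEquiv.neg ℝ (M := ℝ)) bS

lemma HS_apply (x : ℝ) : HS x = ((bmp x : ℝ) : ℂ) + ((bmp (-x) : ℝ) : ℂ) := rfl

lemma HS_even (x : ℝ) : HS (-x) = HS x := by
  rw [HS_apply, HS_apply, neg_neg, add_comm]

lemma bmp_zero_near (k : ℤ) {x : ℝ} (h : |x - k| < 1 / 4) : bmp x = 0 := by
  rw [abs_lt] at h
  rcases le_or_gt k 0 with hk | hk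
  · have : (k : ℝ) ≤ 0 := by exact_mod_cast hk
    exact bmp_zero_left (by linarith)
  · have : (1 : ℝ) ≤ k := by exact_mod_cast hk
    exact bmp_zero_right (by linarith)

lemma HS_zero_near (k : ℤ) {x : ℝ} (h : |x - k| < 1 / 4) : HS x = 0 := by
  rw [HS_apply, bmp_zero_near k h, bmp_zero_near (-k) (x := -x)]
  · simp
  · push_cast
    rw [← abs_neg]
    convert h using 2
    ring

/-- The second difference of `HS`. -/
def fS : SchwartzMap ℝ ℂ :=
  SchwartzMap.compSubConstCLM ℂ (-1 : ℝ) HS + SchwartzMap.compSubConstCLM ℂ (1 : ℝ) HS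
    - (2 : ℂ) • HS

lemma fS_apply (x : ℝ) : fS x = HS (x + 1) + HS (x - 1) - 2 * HS x := by
  have : fS x = HS (x - (-1)) + HS (x - 1) - 2 * HS x := rfl
  rw [this, sub_neg_eq_add]

lemma FT_shift (g : SchwartzMap ℝ ℂ) (a w : ℝ) :
    FT (SchwartzMap.compSubConstCLM ℂ a g) w
      = Complex.exp (-(2 * Real.pi * a * w) * Complex.I) * FT g w := by
  have h := congrFun (VectorFourier.fourierIntegral_comp_add_right Real.fourierChar
    MeasureTheory.volume (innerₗ ℝ) (g : ℝ → ℂ) (-a)) w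
  have h1 : FT (SchwartzMap.compSubConstCLM ℂ a g) w = VectorFourier.fourierIntegral
    Real.fourierChar MeasureTheory.volume (innerₗ ℝ) ((g : ℝ → ℂ) ∘ fun v ↦ v + -a) w := rfl
  have h2 : FT g w = VectorFourier.fourierIntegral
    Real.fourierChar MeasureTheory.volume (innerₗ ℝ) (g : ℝ → ℂ) w := rfl
  rw [h1, h, ← h2, Circle.smul_def, Real.fourierChar_apply, smul_eq_mul]
  congr 2
  simp
  ring

lemma FT_fS (w : ℝ) : FT fS w =
    (Complex.exp (2 * Real.pi * Complex.I * w) + Complex.exp (-(2 * Real.pi * Complex.I) * w) - 2)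
      * FT HS w := by
  have : FT fS w = FT (SchwartzMap.compSubConstCLM ℂ (-1 : ℝ) HS) w +
      FT (SchwartzMap.compSubConstCLM ℂ (1 : ℝ) HS) w - 2 * FT HS w := by
    simp only [FT, fS, map_sub, map_add, map_smul]
    rfl
  rw [this, FT_shift, FT_shift]
  push_cast
  rw [show -(2 * (Real.pi : ℂ) * -1 * w) * Complex.I = 2 * Real.pi * Complex.I * w by ring,
    show -(2 * (Real.pi : ℂ) * 1 * w) * Complex.I = -(2 * Real.pi * Complex.I) * w by ring]
  ring

/-- Failure of interpolation in dimension 1: there exists a nonzero even (radial) Schwartz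
function `f : ℝ → ℂ` such that `f`, `f′`, `f̂`, and `f̂′` all vanish at every integer `n ≥ 1`.
Hence even Schwartz functions on `ℝ` are not determined by this interpolation data. -/
theorem interpolation_fails_dim1 :
    ∃ f : SchwartzMap ℝ ℂ, f ≠ 0 ∧ (∀ x : ℝ, f (-x) = f x) ∧
      ∀ n : ℕ, 1 ≤ n →
        f (n : ℝ) = 0 ∧ deriv (⇑f) (n : ℝ) = 0 ∧
        FT f (n : ℝ) = 0 ∧ deriv (⇑(FT f)) (n : ℝ) = 0 := by
  refine ⟨fS, ?_, ?_, ?_⟩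
  · intro h
    have h1 : fS (3 / 8) = 0 := by rw [h]; rfl
    rw [fS_apply, HS_apply, HS_apply, HS_apply, bmp_mid,
      bmp_zero_right (x := 3 / 8 + 1) (by norm_num), bmp_zero_left (x := -(3 / 8 + 1)) (by norm_num),
      bmp_zero_left (x := 3 / 8 - 1) (by norm_num),
      bmp_zero_right (x := -(3 / 8 - 1)) (by norm_num),
      bmp_zero_left (x := -(3 / 8)) (by norm_num)] at h1
    norm_num at h1
  · intro x
    rw [fS_apply, fS_apply, HS_even, ← HS_even (-x + 1), ← HS_even (-x - 1)]
    rw [show -(-x + 1) = x - 1 by ring, show -(-x - 1) = x + 1 by ring]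
    ring
  · intro n _
    have hz : ∀ x : ℝ, |x - n| < 1 / 4 → fS x = 0 := by
      intro x hx
      rw [fS_apply, HS_zero_near (n + 1) (x := x + 1) (by push_cast; simpa using hx),
        HS_zero_near (n - 1) (x := x - 1) (by push_cast; simpa using hx),
        HS_zero_near n (x := x) (by push_cast; simpa using hx)]
      simp
    have hev : (fS : ℝ → ℂ) =ᶠ[nhds (n : ℝ)] fun _ => 0 := by
      filter_upwards [Metric.ball_mem_nhds (n : ℝ) (ε := 1 / 4) (by norm_num)] with x hx
      exact hz x (by simpa [Real.dist_eq] using hx)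
    have e1 : Complex.exp (2 * Real.pi * Complex.I * (n : ℝ)) = 1 := by
      rw [Complex.exp_eq_one_iff]
      exact ⟨n, by push_cast; ring⟩
    have e2 : Complex.exp (-(2 * Real.pi * Complex.I) * (n : ℝ)) = 1 := by
      rw [Complex.exp_eq_one_iff]
      exact ⟨-n, by push_cast; ring⟩
    refine ⟨hz n (by simp), ?_, ?_, ?_⟩
    · rw [hev.deriv_eq]; simp
    · rw [FT_fS, e1, e2]; ring
    · have hE : ∀ c : ℂ, HasDerivAt (fun w : ℝ => Complex.exp (c * w))
          (Complex.exp (c * (n : ℝ)) * c) (n : ℝ) := by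
        intro c
        have := ((Complex.ofRealCLM.hasDerivAt (x := (n : ℝ))).const_mul c).cexp
        simpa using this
      have hd := (((hE (2 * Real.pi * Complex.I)).add (hE (-(2 * Real.pi * Complex.I)))).sub_const
        2).mul ((FT HS).differentiable.differentiableAt (x := (n : ℝ))).hasDerivAt
      have heq : (FT fS : ℝ → ℂ) = _ := funext FT_fS
      rw [heq]
      refine (HasDerivAt.deriv hd).trans ?_
      simp only [Pi.add_apply, e1, e2]
      ring

end
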